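/- Let X = Spec(B) be given by a local presentation attached to the multiplicity as in the context, with elimination algebra G_X^{(d)} and closed point ξ. Let C be the set of arcs φ in X through ξ satisfying r_{X,φ}/ord(φ) = ord(G_X^{(d)}). Then ord(G_X^{(d)}) = max_{φ ∈ C} ρ_{X,φ}/ord(φ), and this maximum is attained. -/

import Mathlib

open Polynomial
open scoped ENNReal

noncomputable section

namespace NashMult

/-- The `m`-adic order `ν(f)` of an element `f` of a ring: the largest `n` with `f ∈ m ^ n`. -/
def adicOrder {R : Type*} [CommRing R] (m : Ideal R) (f : R) : ℕ :=
  sSup {n : ℕ | f ∈ m ^ n}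

/-- A subalgebra `G ⊆ R[W]` is *graded* if it is spanned by its "monomials", i.e. it is closed
under taking homogeneous components.  This is the condition expressing that `G = ⊕ I_l W^l`
for a family of ideals `I_l` (with `I_0 = R` and `I_i · I_j ⊆ I_{i+j}` automatic). -/
def Graded {R : Type*} [CommRing R] (G : Subalgebra R (Polynomial R)) : Prop :=
  ∀ p ∈ G, ∀ n : ℕ, (C (p.coeff n) * X ^ n : Polynomial R) ∈ G

/-- A *Rees algebra* over `R`: a finitely generated graded subalgebra of `R[W]`. -/
def IsReesAlgebra {R : Type*} [CommRing R] (G : Subalgebra R (Polynomial R)) : Prop :=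
  G.FG ∧ Graded G

/-- The order of (the Rees algebra) `G` at the closed point of the local ring `(R, m)`:
`ord(G) = inf { ν(f)/n : f W^n a homogeneous element of G, n ≥ 1, f ≠ 0 }`
(with value `∞` for the empty infimum). -/
def reesOrder {R : Type*} [CommRing R] (m : Ideal R) (G : Subalgebra R (Polynomial R)) : ℝ≥0∞ :=
  sInf {q : ℝ≥0∞ | ∃ (f : R) (n : ℕ), f ≠ 0 ∧ 1 ≤ n ∧ (C f * X ^ n : Polynomial R) ∈ G ∧
    q = (adicOrder m f : ℝ≥0∞) / (n : ℝ≥0∞)}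

/-- `G = ⊕ I_l W^l` is *differentially closed* relative to a family `D` of derivations if
`I_{l+1} ⊆ I_l` and `D_j (I_l) ⊆ I_{l-1}` for all `l ≥ 1` and all `j`. -/
def DiffClosed {k R ι : Type*} [CommRing k] [CommRing R] [Algebra k R]
    (D : ι → Derivation k R R) (G : Subalgebra R (Polynomial R)) : Prop :=
  (∀ (f : R) (l : ℕ), 1 ≤ l → (C f * X ^ (l + 1) : Polynomial R) ∈ G →
      (C f * X ^ l : Polynomial R) ∈ G) ∧
  (∀ (f : R) (l : ℕ) (j : ι), (C f * X ^ (l + 1) : Polynomial R) ∈ G →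
      (C (D j f) * X ^ l : Polynomial R) ∈ G)

/-- `Diff(M)`: the smallest graded differentially closed subalgebra of `R[W]` containing the
set `M`. -/
def diffClosure {k R ι : Type*} [CommRing k] [CommRing R] [Algebra k R]
    (D : ι → Derivation k R R) (M : Set (Polynomial R)) : Subalgebra R (Polynomial R) :=
  sInf {G : Subalgebra R (Polynomial R) | M ⊆ ↑G ∧ Graded G ∧ DiffClosed D G}

/-- The image `ψ(G)` of a Rees algebra `G` over `R` under a homomorphism (arc) `ψ : R → K⟦t⟧`:
the Rees algebra over `K⟦t⟧` generated by all `ψ(g) W^l` for `g W^l` a homogeneous element of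
`G` with `ψ(g) ≠ 0`. -/
def arcImage {R A : Type*} [CommRing R] [CommRing A] (ψ : R → A)
    (G : Subalgebra R (Polynomial R)) : Subalgebra A (Polynomial A) :=
  Algebra.adjoin A {p : Polynomial A | ∃ (g : R) (l : ℕ),
    (C g * X ^ l : Polynomial R) ∈ G ∧ ψ g ≠ 0 ∧ p = C (ψ g) * X ^ l}

/-- The order `ord(ψ)` of an arc `ψ : R → K⟦t⟧`: the largest `n` such that
`ψ(m) ⊆ t^n` (`t` being the ideal `tI`). -/
def homOrd {R A : Type*} [CommRing R] [CommRing A] (m : Ideal R) (tI : Ideal A)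
    (ψ : R → A) : ℕ :=
  sSup {n : ℕ | ∀ s ∈ m, ψ s ∈ tI ^ n}

/-- The maximal ideal `(t)` of `K⟦t⟧`. -/
def tId (K : Type*) [CommRing K] : Ideal (PowerSeries K) :=
  Ideal.span {(PowerSeries.X : PowerSeries K)}

/-- The `t`-adic order on `K⟦t⟧`. -/
def tOrd {K : Type*} [CommRing K] (g : PowerSeries K) : ℕ :=
  adicOrder (tId K) g

/-- The family of ideals `I_l` of the graded algebra `G = ⊕ I_l W^l`. -/
def idealFam {R : Type*} [CommRing R] (G : Subalgebra R (Polynomial R)) (l : ℕ) : Ideal R :=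
  Submodule.comap (Polynomial.monomial l : R →ₗ[R] Polynomial R) (Subalgebra.toSubmodule G)

/-- The closed point of the local ring `(R, m)` belongs to the singular locus of
`G = ⊕ I_l W^l`, i.e. `ν(I_l) ≥ l` for all `l ≥ 1`. -/
def SingFam {R : Type*} [CommRing R] (m : Ideal R) (I : ℕ → Ideal R) : Prop :=
  ∀ l : ℕ, 1 ≤ l → I l ≤ m ^ l

/-- The transform `⊕ (I_l · T^{-l}) W^l` of a Rees algebra `⊕ I_l W^l` over a DVR with
uniformizer `T` (when the closed point lies in the singular locus, `I_l ⊆ (T^l)` and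
`I_l · T^{-l} = (I_l : (T^l))`). -/
def transformFam {R : Type*} [CommRing R] (T : R) (I : ℕ → Ideal R) : ℕ → Ideal R :=
  fun l => (I l).colon (Ideal.span {T ^ l})

/-- The persistance: the least number `κ` of transforms needed so that the closed point no
longer lies in the singular locus. -/
def persist {R : Type*} [CommRing R] (m : Ideal R) (T : R)
    (G : Subalgebra R (Polynomial R)) : ℕ :=
  sInf {κ : ℕ | ¬ SingFam m ((transformFam T)^[κ] (idealFam G))}

/-- The set of elements of a ring integral over a subset `s` (monic equation with
coefficients in `s`). -/
def intClos {A : Type*} [CommRing A] (s : Set A) : Set A :=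
  {p : A | ∃ q : Polynomial A, q.Monic ∧ (∀ n, q.coeff n ∈ s) ∧ Polynomial.eval p q = 0}


/-- The monic polynomial `f = x^b + B_{b-2} x^{b-2} + ⋯ + B_1 x + B_0` with coefficients
`B_j = Bc j` (only `j ≤ b - 2` is relevant). -/
def minPolyOf {S : Type*} [CommRing S] (b : ℕ) (Bc : ℕ → S) : Polynomial S :=
  Polynomial.X ^ b + ∑ j ∈ Finset.range (b - 1), Polynomial.C (Bc j) * Polynomial.X ^ j


/-- The maximal ideal `(z_1, …, z_d)` of the polynomial ring `k[z_1, …, z_d]`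
(the kernel of evaluation at the origin). -/
def mPoly (k : Type) [Field k] (d : ℕ) : Ideal (MvPolynomial (Fin d) k) :=
  RingHom.ker (MvPolynomial.aeval (fun _ => (0 : k)) : MvPolynomial (Fin d) k →ₐ[k] k)

instance {k : Type} [Field k] {d : ℕ} : (mPoly k d).IsMaximal :=
  RingHom.ker_isMaximal_of_surjective _ (fun a => ⟨MvPolynomial.C a, by simp⟩)

instance {k : Type} [Field k] {d : ℕ} : (mPoly k d).IsPrime :=
  (inferInstance : (mPoly k d).IsMaximal).isPrime

/-- `IsSLoc k d S` says that `S` is (identified with) the localization of `k[z_1, …, z_d]`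
at the maximal ideal `(z_1, …, z_d)`. -/
abbrev IsSLoc (k : Type) [Field k] (d : ℕ) (S : Type) [CommRing S]
    [Algebra (MvPolynomial (Fin d) k) S] : Prop :=
  IsLocalization.AtPrime S (mPoly k d)

/-- The element `z_j` of `S`. -/
def zvar (k : Type) [Field k] (d : ℕ) (S : Type) [CommRing S]
    [Algebra (MvPolynomial (Fin d) k) S] (j : Fin d) : S :=
  algebraMap (MvPolynomial (Fin d) k) S (MvPolynomial.X j)

/-- The maximal ideal `m = (z_1, …, z_d)` of the local ring `S`. -/
def mS (k : Type) [Field k] (d : ℕ) (S : Type) [CommRing S]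
    [Algebra (MvPolynomial (Fin d) k) S] : Ideal S :=
  (mPoly k d).map (algebraMap (MvPolynomial (Fin d) k) S)


variable (k : Type) [Field k] (d : ℕ)
variable (S : Type) [CommRing S] [Algebra (MvPolynomial (Fin d) k) S] [Algebra k S]

/-- A local presentation, attached to the multiplicity, of a `d`-dimensional variety
`X = Spec B` at the closed point `ξ`:  `B = S[x_1,…,x_{n-d}]/I` with `I` prime,
`S → B` injective and finite, and the minimal polynomial over `Frac S` of the class `θ_i`
of `x_i` is `f_i = x_i^{b_i} + B_{i,b_i-2} x_i^{b_i-2} + ⋯ + B_{i,0}` with `b_i ≥ 2`,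
`B_{i,j} ∈ m^{b_i - j}`, and some `B_{i,j} ≠ 0`. -/
structure Presentation [IsDomain S] : Type 1 where
  /-- the number `n - d ≥ 1` of extra variables `x_i` -/
  e : ℕ
  he : 1 ≤ e
  /-- the prime ideal `I ⊆ S[x_1,…,x_{n-d}]` defining `X` -/
  I : Ideal (MvPolynomial (Fin e) S)
  hprime : I.IsPrime
  hinj : Function.Injective (algebraMap S (MvPolynomial (Fin e) S ⧸ I))
  hfinite : Module.Finite S (MvPolynomial (Fin e) S ⧸ I)
  /-- the degrees `b_i ≥ 2` -/
  b : Fin e → ℕ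
  hb : ∀ i, 2 ≤ b i
  /-- the coefficients `B_{i,j}` (only `j ≤ b_i - 2` is relevant) -/
  Bc : Fin e → ℕ → S
  /-- `f_i(θ_i) = 0` -/
  hroot : ∀ i, Polynomial.aeval (Ideal.Quotient.mk I (MvPolynomial.X i))
    (minPolyOf (b i) (Bc i)) = 0
  /-- `f_i` is irreducible over `Frac S`, i.e. it is the minimal polynomial of `θ_i` -/
  hirr : ∀ i, Irreducible ((minPolyOf (b i) (Bc i)).map (algebraMap S (FractionRing S)))
  /-- `B_{i,j} ∈ m^{b_i - j}` -/
  hmem : ∀ i, ∀ j ≤ b i - 2, Bc i j ∈ (mS k d S) ^ (b i - j)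
  /-- some `B_{i,j} ≠ 0` -/
  hnz : ∃ i, ∃ j ≤ b i - 2, Bc i j ≠ 0

variable [IsDomain S]
variable {k d S}

/-- The coordinate ring `B = S[x_1,…,x_{n-d}]/I` of `X`. -/
abbrev BRing (P : Presentation k d S) : Type :=
  MvPolynomial (Fin P.e) S ⧸ P.I

/-- The class `θ_i` of `x_i` in `B`. -/
def theta (P : Presentation k d S) (i : Fin P.e) : BRing P :=
  Ideal.Quotient.mk P.I (MvPolynomial.X i)

/-- The elimination algebra in dimension `d`:
`G_X^{(d)} = Diff( S[ B_{i,j} W^{b_i - j} : i, j ] )`, a Rees algebra over `S`. -/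
def elimAlg (P : Presentation k d S) (D : Fin d → Derivation k S S) :
    Subalgebra S (Polynomial S) :=
  diffClosure D {p : Polynomial S | ∃ i, ∃ j ≤ P.b i - 2,
    p = Polynomial.C (P.Bc i j) * Polynomial.X ^ (P.b i - j)}

/-- An arc in `X` through `ξ` (with the required nonvanishing): a `k`-algebra homomorphism
`φ : B → K⟦t⟧` sending the maximal ideal of `B` at `ξ` into `(t)`, with all `φ(θ_i)` and
`φ(z_j)` nonzero. -/
def IsArc (P : Presentation k d S) {K : Type} [Field K] [Algebra k K]
    (φ : BRing P →ₐ[k] PowerSeries K) : Prop :=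
  (∀ s ∈ mS k d S, φ (algebraMap S (BRing P) s) ∈ tId K) ∧
  (∀ i, φ (theta P i) ∈ tId K) ∧
  (∀ i, φ (theta P i) ≠ 0) ∧
  (∀ j, φ (algebraMap S (BRing P) (zvar k d S j)) ≠ 0)

/-- The order of an arc: the minimum of the `t`-adic orders of the `φ(θ_i)` and the
`φ(z_j)`. -/
def arcOrd (P : Presentation k d S) {K : Type} [Field K] [Algebra k K]
    (φ : BRing P →ₐ[k] PowerSeries K) : ℕ :=
  sInf ((Set.range fun i => tOrd (φ (theta P i))) ∪
    (Set.range fun j => tOrd (φ (algebraMap S (BRing P) (zvar k d S j)))))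

/-- The contact algebra `G^{(1)}_{X_0,φ}`: the Rees algebra over `K⟦t⟧` generated by the
`φ(θ_i) W` together with all `φ(g) W^l` for `g W^l` a homogeneous element of `G_X^{(d)}`
with `φ(g) ≠ 0`. -/
def contactAlg (P : Presentation k d S) (D : Fin d → Derivation k S S)
    {K : Type} [Field K] [Algebra k K] (φ : BRing P →ₐ[k] PowerSeries K) :
    Subalgebra (PowerSeries K) (Polynomial (PowerSeries K)) :=
  Algebra.adjoin (PowerSeries K)
    ((Set.range fun i => (Polynomial.C (φ (theta P i)) * Polynomial.X :
        Polynomial (PowerSeries K))) ∪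
      {p : Polynomial (PowerSeries K) | ∃ (g : S) (l : ℕ),
        (Polynomial.C g * Polynomial.X ^ l : Polynomial S) ∈ elimAlg P D ∧
        φ (algebraMap S (BRing P) g) ≠ 0 ∧
        p = Polynomial.C (φ (algebraMap S (BRing P) g)) * Polynomial.X ^ l})

/-- The order of contact `r_{X,φ}` of the arc `φ` with `Max mult(X)`: the order of the
contact algebra at the closed point of `K⟦t⟧`. -/
def rOrd (P : Presentation k d S) (D : Fin d → Derivation k S S)
    {K : Type} [Field K] [Algebra k K] (φ : BRing P →ₐ[k] PowerSeries K) : ℝ≥0∞ :=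
  reesOrder (tId K) (contactAlg P D φ)

/-- The persistance `ρ_{X,φ}`: the least number of transforms of the contact algebra
(i.e. of point blow-ups directed by `φ`) needed to make the closed point leave the
singular locus, that is, to lower the Nash multiplicity. -/
def rho (P : Presentation k d S) (D : Fin d → Derivation k S S)
    {K : Type} [Field K] [Algebra k K] (φ : BRing P →ₐ[k] PowerSeries K) : ℕ :=
  persist (tId K) (PowerSeries.X : PowerSeries K) (contactAlg P D φ)

/-!
The persistance is the integer part of the order of contact `r`, so `ρ ≤ r` for every arc, and for
the arcs of `C` this reads `ρ / ord φ ≤ ord G`.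

For attainment, write `ord G = ν / N`: as `Diff` does not lower orders that are at least `1`, the
number `ord G` is reached by one of the coefficients `B_{i,j}`. The line through the origin of
`Spec S` in a direction with algebraically independent coordinates has order `ν_m(s)` along every
`s`. After a ramified base change it lifts to `B`: it extends to a map from `B` to the integral
closure of `K[[t]]` in a finite extension of `K((t))`, which embeds into a power series ring by
expanding in a uniformizer. Composing with `t ↦ t ^ N` gives an arc that multiplies orders by some
multiple `E` of `N`. Since `f_i(θ_i) = 0`, the order of `θ_i` is at least the integer `E · ord G`.
So `r = ρ = E · ord G`, while `ord φ = E` as `ord G ≥ 1`.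
-/

/-! ### Orders of Rees algebras -/

section ReesOrder

open scoped NNReal

variable {R : Type*} [CommRing R]

theorem mem_pow_iff_le_adicOrder [IsDomain R] [IsNoetherianRing R] {I : Ideal R} (hI : I ≠ ⊤)
    {f : R} (hf : f ≠ 0) {n : ℕ} : f ∈ I ^ n ↔ n ≤ adicOrder I f := by
  obtain ⟨N, hN⟩ : ∃ N, f ∉ I ^ N := by
    by_contra! h
    rw [← Ideal.mem_iInf, Ideal.iInf_pow_eq_bot_of_isDomain I hI] at h
    exact hf h
  have hbdd : BddAbove {n | f ∈ I ^ n} :=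
    ⟨N, fun n hn => le_of_not_gt fun h => hN (Ideal.pow_le_pow_right h.le hn)⟩
  exact ⟨fun h => le_csSup hbdd h,
    fun h => Ideal.pow_le_pow_right h (Nat.sSup_mem ⟨0, by simp⟩ hbdd)⟩

/-- The algebra `⊕ I^⌈ql⌉ W^l`: the largest graded algebra over `R` whose order along `I` is at
least the slope `q`. -/
def slopeAlg (I : Ideal R) (q : ℝ≥0) : Subalgebra R R[X] where
  carrier := {p | ∀ l : ℕ, p.coeff l ∈ I ^ ⌈q * l⌉₊}
  mul_mem' {p p'} hp hp' l := by
    rw [Polynomial.coeff_mul]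
    refine Ideal.sum_mem _ fun ⟨i, j⟩ hij => ?_
    have hceil : ⌈q * l⌉₊ ≤ ⌈q * i⌉₊ + ⌈q * j⌉₊ := by
      rw [← Finset.HasAntidiagonal.mem_antidiagonal.1 hij, Nat.cast_add, mul_add]
      exact Nat.ceil_add_le _ _
    exact Ideal.pow_le_pow_right hceil (pow_add I _ _ ▸ Ideal.mul_mem_mul (hp i) (hp' j))
  add_mem' hp hp' l := by
    rw [Polynomial.coeff_add]
    exact add_mem (hp l) (hp' l)
  algebraMap_mem' r l := by
    rw [Polynomial.algebraMap_eq, Polynomial.coeff_C]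
    split_ifs with hl
    · simp [hl]
    · exact zero_mem _

theorem C_mul_X_pow_mem_slopeAlg {I : Ideal R} {q : ℝ≥0} {f : R} {l : ℕ} :
    (C f * X ^ l : R[X]) ∈ slopeAlg I q ↔ f ∈ I ^ ⌈q * l⌉₊ := by
  refine ⟨fun h => by simpa using h l, fun h n => ?_⟩
  rw [Polynomial.coeff_C_mul_X_pow]
  split_ifs with hn
  · rwa [hn]
  · exact zero_mem _

theorem graded_slopeAlg (I : Ideal R) (q : ℝ≥0) : Graded (slopeAlg I q) :=
  fun _ hp n => C_mul_X_pow_mem_slopeAlg.2 (hp n)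

theorem reesOrder_le {I : Ideal R} {G : Subalgebra R R[X]} {f : R} {l : ℕ} (hf : f ≠ 0)
    (hl : l ≠ 0) (hmem : (C f * X ^ l : R[X]) ∈ G) :
    reesOrder I G ≤ (adicOrder I f : ℝ≥0∞) / (l : ℝ≥0∞) :=
  sInf_le ⟨f, l, hf, Nat.one_le_iff_ne_zero.2 hl, hmem, rfl⟩

variable [IsDomain R] [IsNoetherianRing R]

theorem mem_pow_ceil_iff {I : Ideal R} (hI : I ≠ ⊤) {q : ℝ≥0} {f : R} (hf : f ≠ 0) {l : ℕ}
    (hl : l ≠ 0) :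
    f ∈ I ^ ⌈q * l⌉₊ ↔ (q : ℝ≥0∞) ≤ (adicOrder I f : ℝ≥0∞) / (l : ℝ≥0∞) := by
  rw [mem_pow_iff_le_adicOrder hI hf, Nat.ceil_le,
    ENNReal.le_div_iff_mul_le (.inl (Nat.cast_ne_zero.2 hl)) (.inl (ENNReal.natCast_ne_top l))]
  exact_mod_cast Iff.rfl

theorem coe_le_reesOrder_iff {I : Ideal R} (hI : I ≠ ⊤) {q : ℝ≥0} {G : Subalgebra R R[X]} :
    (q : ℝ≥0∞) ≤ reesOrder I G ↔
      ∀ (f : R) (l : ℕ), (C f * X ^ l : R[X]) ∈ G → f ∈ I ^ ⌈q * l⌉₊ := by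
  refine ⟨fun h f l hmem => ?_, fun h => le_sInf ?_⟩
  · rcases eq_or_ne f 0 with rfl | hf
    · exact zero_mem _
    rcases eq_or_ne l 0 with rfl | hl
    · simp
    exact (mem_pow_ceil_iff hI hf hl).2 (h.trans (reesOrder_le hf hl hmem))
  · rintro _ ⟨f, l, hf, hl, hmem, rfl⟩
    exact (mem_pow_ceil_iff hI hf (Nat.one_le_iff_ne_zero.1 hl)).1 (h f l hmem)

theorem coe_le_reesOrder_of_le_slopeAlg {I : Ideal R} (hI : I ≠ ⊤) {q : ℝ≥0}
    {G : Subalgebra R R[X]} (hG : G ≤ slopeAlg I q) : (q : ℝ≥0∞) ≤ reesOrder I G :=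
  (coe_le_reesOrder_iff hI).2 fun _ _ hmem => C_mul_X_pow_mem_slopeAlg.1 (hG hmem)

theorem natCast_le_reesOrder_iff {T : R} (hT : ¬IsUnit T) {n : ℕ} {G : Subalgebra R R[X]} :
    (n : ℝ≥0∞) ≤ reesOrder (Ideal.span {T}) G ↔
      ∀ (f : R) (l : ℕ), (C f * X ^ l : R[X]) ∈ G → T ^ (n * l) ∣ f := by
  have h := coe_le_reesOrder_iff (q := n) (G := G) (mt Ideal.span_singleton_eq_top.1 hT)
  simp only [ENNReal.coe_natCast, ← Nat.cast_mul, Nat.ceil_natCast, Ideal.span_singleton_pow,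
    Ideal.mem_span_singleton] at h
  exact h

end ReesOrder

section Persistance

variable {R : Type*} [CommRing R]

theorem mem_idealFam {G : Subalgebra R R[X]} {l : ℕ} {f : R} :
    f ∈ idealFam G l ↔ (C f * X ^ l : R[X]) ∈ G := by
  rw [Polynomial.C_mul_X_pow_eq_monomial]
  rfl

theorem mem_iterate_transformFam {T : R} {I : ℕ → Ideal R} {n l : ℕ} {f : R} :
    f ∈ (transformFam T)^[n] I l ↔ f * T ^ (l * n) ∈ I l := by
  induction n generalizing f with
  | zero => simp
  | succ n ih =>
    rw [Function.iterate_succ_apply', transformFam, Ideal.mem_colon_span_singleton, ih,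
      mul_assoc, ← pow_add, mul_add_one, add_comm l]

variable [IsDomain R]

theorem forall_lt_singFam_iff {T : R} (hT : T ≠ 0) {G : Subalgebra R R[X]} {n : ℕ} :
    (∀ i < n, SingFam (Ideal.span {T}) ((transformFam T)^[i] (idealFam G))) ↔
      ∀ (f : R) (l : ℕ), (C f * X ^ l : R[X]) ∈ G → T ^ (n * l) ∣ f := by
  simp only [SingFam, SetLike.le_def, mem_iterate_transformFam, mem_idealFam,
    Ideal.span_singleton_pow, Ideal.mem_span_singleton]
  refine ⟨fun h f l hf => ?_, fun h i hi l _ f hf => ?_⟩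
  · rcases Nat.eq_zero_or_pos l with rfl | hl
    · simp
    suffices ∀ i ≤ n, T ^ (i * l) ∣ f from this n le_rfl
    intro i hi
    induction i with
    | zero => simp
    | succ i ih =>
      obtain ⟨g, rfl⟩ := ih (by lia)
      rw [add_one_mul, pow_add]
      refine mul_dvd_mul_left _ (h i hi l hl ?_)
      rwa [mul_comm g, mul_comm l]
  · have hdvd : T ^ (l * i) * T ^ l ∣ T ^ (l * i) * f := by
      rw [← pow_add, mul_comm _ f]
      refine (pow_dvd_pow T ?_).trans (h _ l hf)
      rw [← mul_add_one, mul_comm n]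
      exact Nat.mul_le_mul_left l hi
    exact (mul_dvd_mul_iff_left (pow_ne_zero _ hT)).1 hdvd

variable [IsNoetherianRing R]

-- At order `∞` the closed point never leaves the singular locus, and `persist` is `sInf ∅ = 0`.
theorem natCast_le_persist_iff {T : R} (hT : T ≠ 0) (hT' : ¬IsUnit T) {G : Subalgebra R R[X]}
    (hG : reesOrder (Ideal.span {T}) G ≠ ⊤) {n : ℕ} :
    n ≤ persist (Ideal.span {T}) T G ↔ (n : ℝ≥0∞) ≤ reesOrder (Ideal.span {T}) G := by
  have hsing (n : ℕ) := (natCast_le_reesOrder_iff hT' (n := n) (G := G)).trans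
    (forall_lt_singFam_iff hT).symm
  have hne : {i | ¬SingFam (Ideal.span {T}) ((transformFam T)^[i] (idealFam G))}.Nonempty := by
    obtain ⟨N, hN⟩ := ENNReal.exists_nat_gt hG
    have h := mt (hsing N).2 hN.not_ge
    push Not at h
    exact h.imp fun i hi => hi.2
  rw [hsing, persist, le_csInf_iff (OrderBot.bddBelow _) hne]
  refine forall_congr' fun i => ?_
  rw [← not_lt, Set.mem_ofPred_eq, not_imp_not]

theorem persist_le_reesOrder {T : R} (hT : T ≠ 0) (hT' : ¬IsUnit T) (G : Subalgebra R R[X]) :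
    (persist (Ideal.span {T}) T G : ℝ≥0∞) ≤ reesOrder (Ideal.span {T}) G := by
  by_cases hG : reesOrder (Ideal.span {T}) G = ⊤
  · exact hG ▸ le_top
  · exact (natCast_le_persist_iff hT hT' hG).1 le_rfl

theorem persist_eq_of_reesOrder_eq {T : R} (hT : T ≠ 0) (hT' : ¬IsUnit T) {G : Subalgebra R R[X]}
    {n : ℕ} (hn : reesOrder (Ideal.span {T}) G = n) : persist (Ideal.span {T}) T G = n :=
  eq_of_forall_le_iff fun i => by
    rw [natCast_le_persist_iff hT hT' (hn ▸ ENNReal.natCast_ne_top n), hn, Nat.cast_le]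

end Persistance

section DiffClosure

open scoped NNReal

variable {𝕜 R ι : Type*} [CommRing 𝕜] [CommRing R] [Algebra 𝕜 R]

theorem derivation_mem_pow (D : Derivation 𝕜 R R) (I : Ideal R) {n : ℕ} {f : R}
    (hf : f ∈ I ^ (n + 1)) : D f ∈ I ^ n := by
  induction n generalizing f with
  | zero => simp
  | succ n ih =>
    rw [pow_succ'] at hf
    induction hf using Submodule.mul_induction_on' with
    | mem_mul_mem a ha b hb =>
      rw [Derivation.leibniz, smul_eq_mul, smul_eq_mul]
      exact add_mem (pow_succ' I n ▸ Ideal.mul_mem_mul ha (ih hb)) (Ideal.mul_mem_right _ _ hb)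
    | add x _ y _ hx hy => rw [map_add]; exact add_mem hx hy

theorem subset_diffClosure (D : ι → Derivation 𝕜 R R) (M : Set R[X]) :
    M ⊆ diffClosure D M :=
  fun _ hp => Algebra.mem_sInf.2 fun _ hG => hG.1 hp

theorem diffClosed_slopeAlg (D : ι → Derivation 𝕜 R R) (I : Ideal R) {q : ℝ≥0} (hq : 1 ≤ q) :
    DiffClosed D (slopeAlg I q) := by
  have hceil (l : ℕ) : ⌈q * l⌉₊ + 1 ≤ ⌈q * (l + 1 : ℕ)⌉₊ := by
    rw [← Nat.ceil_add_one zero_le, Nat.cast_succ, mul_add_one]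
    gcongr
  simp only [DiffClosed, C_mul_X_pow_mem_slopeAlg]
  exact ⟨fun f l _ hf => Ideal.pow_le_pow_right ((Nat.le_succ _).trans (hceil l)) hf,
    fun f l j hf => derivation_mem_pow _ _ (Ideal.pow_le_pow_right (hceil l) hf)⟩

theorem diffClosure_le_slopeAlg {D : ι → Derivation 𝕜 R R} {I : Ideal R} {q : ℝ≥0} (hq : 1 ≤ q)
    {M : Set R[X]} (hM : M ⊆ slopeAlg I q) : diffClosure D M ≤ slopeAlg I q :=
  sInf_le ⟨hM, graded_slopeAlg I q, diffClosed_slopeAlg D I hq⟩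

end DiffClosure

/-! ### Integral elements and the presentation -/

theorem dvd_of_isRoot_of_pow_dvd_coeff {R : Type*} [CommRing R] [IsDomain R] [IsIntegrallyClosed R]
    {p : R[X]} (hp : p.Monic) {c x : R} (hc : c ≠ 0) (hx : p.IsRoot x)
    (hcoeff : ∀ j, c ^ (p.natDegree - j) ∣ p.coeff j) : c ∣ x := by
  let F := FractionRing R
  have hcF : algebraMap R F c ≠ 0 := by simpa using hc
  -- `x / c` is a root of the monic polynomial with coefficients `p_j / c ^ (deg p - j)`.
  let r : F[X] := (p.map (algebraMap R F)).scaleRoots (algebraMap R F c)⁻¹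
  have hr : r ∈ Polynomial.lifts (algebraMap R F) := by
    refine (Polynomial.lifts_iff_coeff_lifts r).2 fun j => ?_
    obtain ⟨y, hy⟩ := hcoeff j
    refine ⟨y, ?_⟩
    rw [Polynomial.coeff_scaleRoots, Polynomial.coeff_map, hp.natDegree_map, hy, map_mul, map_pow,
      inv_pow, mul_comm, inv_mul_cancel_left₀ (pow_ne_zero _ hcF)]
  obtain ⟨q, hqr, -, hq⟩ := Polynomial.lifts_and_natDegree_eq_and_monic hr
    ((Polynomial.monic_scaleRoots_iff _).2 (hp.map _))
  have hroot : q.eval₂ (algebraMap R F) ((algebraMap R F c)⁻¹ * algebraMap R F x) = 0 := by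
    rw [← Polynomial.eval_map, hqr]
    refine Polynomial.scaleRoots_eval₂_eq_zero (RingHom.id F) ?_
    rw [Polynomial.eval₂_map, RingHom.id_comp, Polynomial.eval₂_hom, hx, map_zero]
  obtain ⟨y, hy⟩ := IsIntegrallyClosed.isIntegral_iff.1 ⟨q, hq, hroot⟩
  refine ⟨y, IsFractionRing.injective R F ?_⟩
  rw [map_mul, hy, mul_inv_cancel_left₀ hcF]

theorem minPolyOf_tail_degree_lt {R : Type*} [CommRing R] {b : ℕ} (hb : b ≠ 0) (β : ℕ → R) :
    (∑ j ∈ Finset.range (b - 1), C (β j) * X ^ j : R[X]).degree < b := by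
  rw [Polynomial.degree_lt_iff_coeff_zero]
  intro n hn
  rw [Polynomial.finsetSum_coeff]
  refine Finset.sum_eq_zero fun j hj => ?_
  rw [Polynomial.coeff_C_mul_X_pow, if_neg]
  have := Finset.mem_range.1 hj
  lia

theorem monic_minPolyOf {R : Type*} [CommRing R] {b : ℕ} (hb : b ≠ 0) (β : ℕ → R) :
    (minPolyOf b β).Monic :=
  Polynomial.monic_X_pow_add (minPolyOf_tail_degree_lt hb β)

theorem natDegree_minPolyOf {R : Type*} [CommRing R] [Nontrivial R] {b : ℕ} (hb : b ≠ 0)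
    (β : ℕ → R) : (minPolyOf b β).natDegree = b := by
  rw [minPolyOf, Polynomial.natDegree_add_eq_left_of_degree_lt, Polynomial.natDegree_X_pow]
  simpa using minPolyOf_tail_degree_lt hb β

theorem coeff_minPolyOf {R : Type*} [CommRing R] {b j : ℕ} (hj : j < b) (β : ℕ → R) :
    (minPolyOf b β).coeff j = if j < b - 1 then β j else 0 := by
  simp [minPolyOf, Polynomial.coeff_X_pow, hj.ne]

namespace Presentation

section Theta

omit [Algebra k S]

theorem isRoot_map_minPolyOf (P : Presentation k d S) {A : Type*} [CommRing A]
    (φ : BRing P →+* A) (i : Fin P.e) :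
    ((minPolyOf (P.b i) (P.Bc i)).map (φ.comp (algebraMap S (BRing P)))).IsRoot
      (φ (theta P i)) := by
  rw [Polynomial.IsRoot, Polynomial.eval_map, ← Polynomial.hom_eval₂]
  exact (congrArg φ (P.hroot i)).trans (map_zero φ)

theorem Bc_zero_ne_zero (P : Presentation k d S) (i : Fin P.e) : P.Bc i 0 ≠ 0 := by
  intro h
  have hb := P.hb i
  have hroot : ((minPolyOf (P.b i) (P.Bc i)).map (algebraMap S (FractionRing S))).IsRoot 0 := by
    apply Polynomial.zero_isRoot_of_coeff_zero_eq_zero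
    rw [Polynomial.coeff_map, coeff_minPolyOf (by lia), h, ite_self, map_zero]
  have hdeg := Polynomial.natDegree_eq_of_degree_eq_some
    (Polynomial.degree_eq_one_of_irreducible_of_root (P.hirr i) hroot)
  rw [(monic_minPolyOf (by lia) _).natDegree_map, natDegree_minPolyOf (by lia)] at hdeg
  exact absurd (hb.trans_eq hdeg) (by decide)

theorem map_theta_ne_zero (P : Presentation k d S) {A : Type*} [CommRing A] {φ : BRing P →+* A}
    (hφ : ∀ s ≠ 0, φ (algebraMap S (BRing P) s) ≠ 0) (i : Fin P.e) : φ (theta P i) ≠ 0 := by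
  intro h
  have hb := P.hb i
  have hroot := P.isRoot_map_minPolyOf φ i
  rw [h, Polynomial.IsRoot, ← Polynomial.coeff_zero_eq_eval_zero, Polynomial.coeff_map,
    coeff_minPolyOf (by lia), if_pos (by lia)] at hroot
  exact hφ _ (P.Bc_zero_ne_zero i) hroot

theorem dvd_map_theta (P : Presentation k d S) {A : Type*} [CommRing A] [IsDomain A]
    [IsIntegrallyClosed A] {φ : BRing P →+* A} {c : A} (hc : c ≠ 0) {i : Fin P.e}
    (hB : ∀ j ≤ P.b i - 2, c ^ (P.b i - j) ∣ φ (algebraMap S (BRing P) (P.Bc i j))) :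
    c ∣ φ (theta P i) := by
  have hb : P.b i ≠ 0 := by have := P.hb i; lia
  have hmonic := monic_minPolyOf hb (P.Bc i)
  refine dvd_of_isRoot_of_pow_dvd_coeff (hmonic.map _) hc (P.isRoot_map_minPolyOf φ i) fun j => ?_
  rw [hmonic.natDegree_map, natDegree_minPolyOf hb, Polynomial.coeff_map]
  rcases lt_or_ge j (P.b i) with hj | hj
  · rw [coeff_minPolyOf hj]
    split_ifs with hj'
    · exact hB j (by lia)
    · rw [map_zero]
      exact dvd_zero _
  · rw [Nat.sub_eq_zero_of_le hj, pow_zero]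
    exact one_dvd _

end Theta

theorem C_Bc_mul_X_pow_mem_elimAlg (P : Presentation k d S) (D : Fin d → Derivation k S S)
    {i : Fin P.e} {j : ℕ} (hj : j ≤ P.b i - 2) :
    (C (P.Bc i j) * X ^ (P.b i - j) : S[X]) ∈ elimAlg P D :=
  subset_diffClosure D _ ⟨i, j, hj, rfl⟩

end Presentation

/-! ### The order of the elimination algebra -/

section ElimAlg

open scoped NNReal

variable (k d S) in
omit [Algebra k S] [IsDomain S] in
theorem isNoetherianRing_of_isSLoc [IsSLoc k d S] : IsNoetherianRing S :=
  IsLocalization.isNoetherianRing (mPoly k d).primeCompl S inferInstance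

variable (k d S) in
omit [Algebra k S] [IsDomain S] in
theorem mS_ne_top [IsSLoc k d S] : mS k d S ≠ ⊤ :=
  (IsLocalization.map_algebraMap_ne_top_iff_disjoint (mPoly k d).primeCompl S _).2
    disjoint_compl_left

omit [IsDomain S] in
theorem zvar_ne_zero [Nontrivial S] {j : Fin d} {D : Derivation k S S}
    (hD : D (zvar k d S j) = 1) : zvar k d S j ≠ 0 := by
  intro h
  rw [h, map_zero] at hD
  exact zero_ne_one hD

theorem adicOrder_zvar [IsSLoc k d S] {j : Fin d} {D : Derivation k S S}
    (hD : D (zvar k d S j) = 1) : adicOrder (mS k d S) (zvar k d S j) = 1 := by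
  have := isNoetherianRing_of_isSLoc k d S
  have hmem {n : ℕ} := mem_pow_iff_le_adicOrder (mS_ne_top k d S) (zvar_ne_zero hD) (n := n)
  refine le_antisymm (not_lt.1 fun h => mS_ne_top k d S ?_) (hmem.1 ?_)
  · rw [Ideal.eq_top_iff_one, ← hD, ← pow_one (mS k d S)]
    exact derivation_mem_pow D _ (hmem.2 h)
  · rw [pow_one]
    exact Ideal.mem_map_of_mem _ (by simp [mPoly])

variable [IsSLoc k d S] (P : Presentation k d S) (D : Fin d → Derivation k S S)

theorem one_le_reesOrder_elimAlg : 1 ≤ reesOrder (mS k d S) (elimAlg P D) := by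
  have := isNoetherianRing_of_isSLoc k d S
  refine mod_cast coe_le_reesOrder_of_le_slopeAlg (mS_ne_top k d S) (q := 1)
    (diffClosure_le_slopeAlg le_rfl ?_)
  rintro _ ⟨i, j, hj, rfl⟩
  refine C_mul_X_pow_mem_slopeAlg.2 ?_
  rw [one_mul, Nat.ceil_natCast]
  exact P.hmem i j hj

theorem exists_reesOrder_elimAlg_eq_div :
    ∃ ν N : ℕ, N ≠ 0 ∧ reesOrder (mS k d S) (elimAlg P D) = (ν : ℝ≥0∞) / (N : ℝ≥0∞) := by
  have := isNoetherianRing_of_isSLoc k d S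
  have hpow {i j} (hj : j ≤ P.b i - 2) : P.b i - j ≠ 0 := by have := P.hb i; lia
  let J := {x : Σ i : Fin P.e, Set.Iic (P.b i - 2) // P.Bc x.1 x.2 ≠ 0}
  have : Nonempty J := by
    obtain ⟨i, j, hj, hB⟩ := P.hnz
    exact ⟨⟨⟨i, j, hj⟩, hB⟩⟩
  let slope (x : J) : ℝ≥0 := adicOrder (mS k d S) (P.Bc x.1.1 x.1.2) / (P.b x.1.1 - x.1.2 : ℕ)
  have hslope (x : J) : (slope x : ℝ≥0∞) =
      (adicOrder (mS k d S) (P.Bc x.1.1 x.1.2) : ℝ≥0∞) / ((P.b x.1.1 - x.1.2 : ℕ) : ℝ≥0∞) := by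
    rw [ENNReal.coe_div (Nat.cast_ne_zero.2 (hpow x.1.2.2)), ENNReal.coe_natCast,
      ENNReal.coe_natCast]
  have hle (x : J) : reesOrder (mS k d S) (elimAlg P D) ≤ slope x := by
    rw [hslope]
    exact reesOrder_le x.2 (hpow x.1.2.2) (P.C_Bc_mul_X_pow_mem_elimAlg D x.1.2.2)
  obtain ⟨x, hx⟩ := Finite.exists_min slope
  refine ⟨_, _, hpow x.1.2.2, le_antisymm (hslope x ▸ hle x) (hslope x ▸ ?_)⟩
  refine coe_le_reesOrder_of_le_slopeAlg (mS_ne_top k d S) (diffClosure_le_slopeAlg ?_ ?_)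
  · exact mod_cast (one_le_reesOrder_elimAlg P D).trans (hle x)
  rintro _ ⟨i, j, hj, rfl⟩
  refine C_mul_X_pow_mem_slopeAlg.2 ?_
  rcases eq_or_ne (P.Bc i j) 0 with hB | hB
  · exact hB ▸ zero_mem _
  rw [mem_pow_ceil_iff (mS_ne_top k d S) hB (hpow hj), ← hslope ⟨⟨i, j, hj⟩, hB⟩]
  exact mod_cast hx ⟨⟨i, j, hj⟩, hB⟩

end ElimAlg

/-! ### Orders of power series -/

section PowerSeriesOrder

open scoped PowerSeries

variable {K : Type*} [Field K]

theorem X_pow_dvd_iff_le_order {f : K⟦X⟧} {n : ℕ} : PowerSeries.X ^ n ∣ f ↔ n ≤ f.order := by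
  rw [PowerSeries.order_eq_emultiplicity_X, pow_dvd_iff_le_emultiplicity]

theorem natCast_adicOrder_tId {f : K⟦X⟧} (hf : f ≠ 0) : (adicOrder (tId K) f : ℕ∞) = f.order := by
  have htop : tId K ≠ ⊤ := mt Ideal.span_singleton_eq_top.1 PowerSeries.X_irreducible.not_isUnit
  refine ENat.eq_of_forall_natCast_le_iff fun n => ?_
  rw [Nat.cast_le, ← mem_pow_iff_le_adicOrder htop hf, tId, Ideal.span_singleton_pow,
    Ideal.mem_span_singleton, X_pow_dvd_iff_le_order]

theorem order_map {L : Type*} [Field L] (τ : K⟦X⟧ →+* L⟦X⟧) {f : K⟦X⟧} (hf : f ≠ 0) :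
    (τ f).order = f.order * (τ PowerSeries.X).order := by
  have hunit := (PowerSeries.isUnit_divided_by_X_pow_order hf).map τ
  conv_lhs => rw [← PowerSeries.X_pow_order_mul_divXPowOrder (f := f), map_mul, map_pow]
  rw [PowerSeries.order_mul, PowerSeries.order_zero_of_unit hunit, add_zero,
    PowerSeries.order_pow, nsmul_eq_mul, PowerSeries.coe_toNat_order hf]

variable {R : Type*} [CommRing R]

/-- The arc `ψ : R → K⟦t⟧` has `t`-adic order `E · ν_I(s)` along every nonzero `s`, where `ν_I` is
the `I`-adic order; in particular it is injective. -/
def ScalesOrder (I : Ideal R) (E : ℕ) (ψ : R →+* K⟦X⟧) : Prop :=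
  ∀ s ≠ 0, (ψ s).order = (E * adicOrder I s : ℕ)

namespace ScalesOrder

variable {I : Ideal R} {E : ℕ} {ψ : R →+* K⟦X⟧}

theorem map_ne_zero (hψ : ScalesOrder I E ψ) {s : R} (hs : s ≠ 0) : ψ s ≠ 0 := fun h => by
  have hord := hψ s hs
  rw [h, PowerSeries.order_zero] at hord
  exact ENat.natCast_ne_top _ hord.symm

theorem adicOrder_map (hψ : ScalesOrder I E ψ) {s : R} (hs : s ≠ 0) :
    adicOrder (tId K) (ψ s) = E * adicOrder I s :=
  ENat.natCast_inj.1 ((natCast_adicOrder_tId (hψ.map_ne_zero hs)).trans (hψ s hs))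

theorem comp {L : Type*} [Field L] (hψ : ScalesOrder I E ψ) (τ : K⟦X⟧ →+* L⟦X⟧) {n : ℕ}
    (hn : (τ PowerSeries.X).order = n) : ScalesOrder I (n * E) (τ.comp ψ) := fun s hs => by
  rw [RingHom.comp_apply, order_map τ (hψ.map_ne_zero hs), hψ s hs, hn]
  push_cast
  ring

theorem X_pow_dvd_map (hψ : ScalesOrder I E ψ) {G : Subalgebra R R[X]} {M : ℕ}
    (hM : (M : ℝ≥0∞) ≤ E * reesOrder I G) {g : R} {l : ℕ} (hg : (C g * X ^ l : R[X]) ∈ G) :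
    PowerSeries.X ^ (M * l) ∣ ψ g := by
  rcases eq_or_ne g 0 with rfl | hg0
  · simp
  rcases eq_or_ne l 0 with rfl | hl
  · simp
  rw [X_pow_dvd_iff_le_order, hψ g hg0, Nat.cast_le]
  have hle : (M : ℝ≥0∞) ≤ E * adicOrder I g / l := by
    rw [mul_div_assoc]
    exact hM.trans (by gcongr; exact reesOrder_le hg0 hl hg)
  rw [ENNReal.le_div_iff_mul_le (.inl (Nat.cast_ne_zero.2 hl)) (.inl (ENNReal.natCast_ne_top l))]
    at hle
  exact_mod_cast hle

theorem reesOrder_image_le (hψ : ScalesOrder I E ψ) (hE : E ≠ 0) {G : Subalgebra R R[X]}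
    {H : Subalgebra K⟦X⟧ K⟦X⟧[X]}
    (hGH : ∀ (g : R) (l : ℕ), (C g * X ^ l : R[X]) ∈ G → ψ g ≠ 0 → C (ψ g) * X ^ l ∈ H) :
    reesOrder (tId K) H ≤ E * reesOrder I G := by
  have hE' : (E : ℝ≥0∞) ≠ 0 := Nat.cast_ne_zero.2 hE
  rw [mul_comm, ← ENNReal.div_le_iff_le_mul (.inl hE') (.inl (ENNReal.natCast_ne_top E))]
  refine le_sInf ?_
  rintro _ ⟨g, l, hg, hl, hmem, rfl⟩
  have hψg := hψ.map_ne_zero hg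
  rw [ENNReal.div_le_iff_le_mul (.inl hE') (.inl (ENNReal.natCast_ne_top E)), mul_comm,
    ← mul_div_assoc, ← Nat.cast_mul, ← hψ.adicOrder_map hg]
  exact reesOrder_le hψg (Nat.one_le_iff_ne_zero.1 hl) (hGH g l hmem hψg)

end ScalesOrder

end PowerSeriesOrder

/-! ### The generic line -/

section GenericLine

open scoped PowerSeries

variable {F K σ : Type*} [Field F] [Field K] [Algebra F K]

/-- The arc `z_j ↦ a_j t`: the line through the origin in the direction `a`. -/
def lineArc (F : Type*) [Field F] [Algebra F K] (a : σ → K) : MvPolynomial σ F →ₐ[F] K⟦X⟧ :=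
  MvPolynomial.aeval fun j => PowerSeries.C (a j) * PowerSeries.X

theorem coeff_lineArc (a : σ → K) (p : MvPolynomial σ F) (n : ℕ) :
    PowerSeries.coeff n (lineArc F a p) =
      MvPolynomial.aeval a (MvPolynomial.homogeneousComponent n p) := by
  induction p using MvPolynomial.induction_on' with
  | add p q hp hq => simp only [map_add, hp, hq]
  | monomial u c =>
    have hline : lineArc F a (MvPolynomial.monomial u c) =
        PowerSeries.C (MvPolynomial.aeval a (MvPolynomial.monomial u c)) *
          PowerSeries.X ^ u.degree := by
      simp only [lineArc, MvPolynomial.aeval_monomial, mul_pow, Finsupp.prod,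
        Finset.prod_mul_distrib, Finset.prod_pow_eq_pow_sum, Finsupp.degree, map_mul, map_prod,
        map_pow, PowerSeries.algebraMap_apply, mul_assoc]
      rfl
    rw [hline, PowerSeries.coeff_C_mul_X_pow, MvPolynomial.homogeneousComponent_of_mem
      (MvPolynomial.isHomogeneous_monomial c (n := u.degree) rfl)]
    split_ifs <;> simp

theorem X_pow_dvd_lineArc_iff {a : σ → K} (ha : AlgebraicIndependent F a)
    {p : MvPolynomial σ F} {n : ℕ} :
    PowerSeries.X ^ n ∣ lineArc F a p ↔ p ∈ MvPolynomial.idealOfVars σ F ^ n := by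
  simp only [PowerSeries.X_pow_dvd_iff, coeff_lineArc, map_eq_zero_iff _ ha,
    MvPolynomial.mem_pow_idealOfVars_iff']
  refine ⟨fun h u hu => ?_, fun h m hm => ?_⟩
  · have hcoeff := MvPolynomial.coeff_homogeneousComponent u.degree p u
    rwa [h _ hu, MvPolynomial.coeff_zero, if_pos rfl, eq_comm] at hcoeff
  · ext u
    rw [MvPolynomial.coeff_homogeneousComponent, MvPolynomial.coeff_zero]
    split_ifs with hu
    · exact h u (hu ▸ hm)
    · rfl

omit S in
theorem mPoly_eq_idealOfVars : mPoly k d = MvPolynomial.idealOfVars (Fin d) k := by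
  ext p
  rw [← pow_one (MvPolynomial.idealOfVars _ _), MvPolynomial.mem_pow_idealOfVars_iff']
  simp [mPoly, MvPolynomial.constantCoeff_eq, Finsupp.degree_eq_zero_iff]

variable (S) [IsScalarTower k (MvPolynomial (Fin d) k) S] [IsSLoc k d S] [Algebra k K]

theorem exists_scalesOrder_line {a : Fin d → K} (ha : AlgebraicIndependent k a) :
    ∃ ψ : S →ₐ[k] K⟦X⟧, ScalesOrder (mS k d S) 1 (ψ : S →+* K⟦X⟧) := by
  have hline {p : MvPolynomial (Fin d) k} {n : ℕ} :
      PowerSeries.X ^ n ∣ lineArc k a p ↔ p ∈ mPoly k d ^ n :=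
    mPoly_eq_idealOfVars (k := k) (d := d) ▸ X_pow_dvd_lineArc_iff ha
  have hunit (y : (mPoly k d).primeCompl) : IsUnit (lineArc k a y) := by
    rw [PowerSeries.isUnit_iff_constantCoeff, isUnit_iff_ne_zero, Ne, ← PowerSeries.X_dvd_iff,
      ← pow_one PowerSeries.X, hline, pow_one]
    exact y.2
  let ψ : S →ₐ[k] K⟦X⟧ := IsLocalization.liftAlgHom (M := (mPoly k d).primeCompl) hunit
  have hψ (p) : ψ (algebraMap _ S p) = lineArc k a p := IsLocalization.lift_eq _ _
  have hmem {s : S} {n : ℕ} : PowerSeries.X ^ n ∣ ψ s ↔ s ∈ mS k d S ^ n := by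
    rw [mS, ← Ideal.map_pow]
    refine ⟨fun hs => ?_, fun hs => ?_⟩
    · obtain ⟨⟨p, y⟩, hpy⟩ := IsLocalization.surj (mPoly k d).primeCompl s
      rw [← Ideal.mul_unit_mem_iff_mem _ (IsLocalization.map_units S y), hpy]
      refine Ideal.mem_map_of_mem _ (hline.1 ?_)
      rw [← hψ, ← hpy, map_mul]
      exact hs.mul_right _
    · have hle : Ideal.map (algebraMap _ S) (mPoly k d ^ n) ≤
          (Ideal.span {PowerSeries.X ^ n}).comap ψ := Ideal.map_le_iff_le_comap.2 fun p hp => by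
        rwa [Ideal.mem_comap, Ideal.mem_comap, hψ, Ideal.mem_span_singleton, hline]
      exact Ideal.mem_span_singleton.1 (hle hs)
  have := isNoetherianRing_of_isSLoc k d S
  refine ⟨ψ, fun s hs => ENat.eq_of_forall_natCast_le_iff fun n => ?_⟩
  rw [← X_pow_dvd_iff_le_order, one_mul, Nat.cast_le,
    ← mem_pow_iff_le_adicOrder (mS_ne_top k d S) hs]
  exact hmem

end GenericLine

/-! ### Lifting arcs along finite extensions -/

section Expansion

open scoped PowerSeries

variable {K V : Type*} [Field K] [CommRing V] [Algebra K V]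

theorem exists_linearMap_eq_add_mul [IsDomain V] (r : V →ₐ[K] K) {π : V} (hπ : π ≠ 0)
    (hker : RingHom.ker r = Ideal.span {π}) :
    ∃ T : V →ₗ[K] V, ∀ a, a = algebraMap K V (r a) + π * T a := by
  have hdvd (a : V) : ∃ b, a = algebraMap K V (r a) + π * b := by
    obtain ⟨b, hb⟩ : π ∣ a - algebraMap K V (r a) := by
      rw [← Ideal.mem_span_singleton, ← hker, RingHom.mem_ker, map_sub, AlgHom.commutes]
      exact sub_self _
    exact ⟨b, by rw [← hb, add_sub_cancel]⟩
  choose T hT using hdvd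
  refine ⟨⟨⟨T, fun a b => mul_left_cancel₀ hπ ?_⟩, fun c a => mul_left_cancel₀ hπ ?_⟩, hT⟩
  · have hab := hT (a + b)
    rw [map_add, map_add] at hab
    linear_combination hT a + hT b - hab
  · have hca := hT (c • a)
    rw [map_smul, smul_eq_mul, map_mul, Algebra.smul_def] at hca
    rw [RingHom.id_apply, Algebra.smul_def (A := V), Algebra.smul_def (A := V)]
    linear_combination algebraMap K V c * hT a - hca

/-- The expansion `a ↦ ∑ r(Tⁿ a) tⁿ`. When `a = r(a) + π · T(a)` for all `a`, it replaces `π` by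
`t` in the `π`-adic expansion of `a`. -/
def expansion (r : V →ₐ[K] K) (T : V →ₗ[K] V) : V →ₗ[K] K⟦X⟧ where
  toFun a := PowerSeries.mk fun n => r ((T ^ n) a)
  map_add' a b := by ext; simp
  map_smul' c a := by ext; simp

variable {r : V →ₐ[K] K} {T : V →ₗ[K] V}

theorem expansion_eq (a : V) :
    expansion r T a = PowerSeries.C (r a) + PowerSeries.X * expansion r T (T a) := by
  ext n
  cases n with
  | zero => simp [expansion]
  | succ n => simp [expansion, PowerSeries.coeff_succ_X_mul, pow_succ]

theorem expansion_mul (hT : ∀ a b, T (a * b) = r a • T b + T a * b) (a b : V) :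
    expansion r T (a * b) = expansion r T a * expansion r T b := by
  rw [← sub_eq_zero, ← PowerSeries.order_eq_top, ENat.eq_top_iff_forall_ge]
  intro n
  rw [← X_pow_dvd_iff_le_order]
  induction n generalizing a with
  | zero => simp
  | succ n ih =>
    have hrec : expansion r T (a * b) - expansion r T a * expansion r T b =
        PowerSeries.X * (expansion r T (T a * b) - expansion r T (T a) * expansion r T b) := by
      rw [expansion_eq (a * b), hT, map_add, map_smul, PowerSeries.smul_eq_C_mul, map_mul, map_mul]
      linear_combination -expansion r T b * expansion_eq (r := r) (T := T) a -
        PowerSeries.C (r a) * expansion_eq (r := r) (T := T) b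
    rw [hrec, pow_succ']
    exact mul_dvd_mul_left _ (ih _)

theorem pow_dvd_of_expansion_eq_zero {π : V} (hT : ∀ a, a = algebraMap K V (r a) + π * T a)
    {a : V} (ha : expansion r T a = 0) (n : ℕ) : π ^ n ∣ a := by
  induction n generalizing a with
  | zero => simp
  | succ n ih =>
    have hr : r a = 0 := by simpa [expansion] using congrArg PowerSeries.constantCoeff ha
    rw [expansion_eq, hr, map_zero, zero_add] at ha
    rw [hT a, hr, map_zero, zero_add, pow_succ']
    exact mul_dvd_mul_left _ (ih ((mul_eq_zero.1 ha).resolve_left PowerSeries.X_ne_zero))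

theorem exists_injective_algHom_of_isDiscreteValuationRing [IsDomain V]
    [IsDiscreteValuationRing V] (r : V →ₐ[K] K) :
    ∃ Φ : V →ₐ[K] K⟦X⟧,
      Function.Injective Φ ∧ ∀ a, PowerSeries.constantCoeff (Φ a) = r a := by
  obtain ⟨π, hπ⟩ := IsDiscreteValuationRing.exists_irreducible V
  have hmax : (RingHom.ker r).IsMaximal :=
    RingHom.ker_isMaximal_of_surjective r fun c => ⟨algebraMap K V c, r.commutes c⟩
  have hker : RingHom.ker r = Ideal.span {π} :=
    (IsLocalRing.eq_maximalIdeal hmax).trans hπ.maximalIdeal_eq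
  obtain ⟨T, hT⟩ := exists_linearMap_eq_add_mul r hπ.ne_zero hker
  have hT_mul (a b : V) : T (a * b) = r a • T b + T a * b := by
    have hab := hT (a * b)
    refine mul_left_cancel₀ hπ.ne_zero ?_
    rw [map_mul, map_mul] at hab
    rw [Algebra.smul_def]
    linear_combination b * hT a + algebraMap K V (r a) * hT b - hab
  have hT_one : T 1 = 0 := by
    have h := hT 1
    rw [map_one, map_one, left_eq_add] at h
    exact (mul_eq_zero.1 h).resolve_left hπ.ne_zero
  have h_one : expansion r T 1 = 1 := by rw [expansion_eq, hT_one]; simp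
  refine ⟨AlgHom.ofLinearMap (expansion r T) h_one (expansion_mul hT_mul),
    (injective_iff_map_eq_zero _).2 fun a ha => ?_, fun a => by simp [expansion]⟩
  have hkrull := Ideal.iInf_pow_eq_bot_of_isDomain (Ideal.span {π})
    (Ideal.span_singleton_eq_top.not.2 hπ.not_isUnit)
  rw [← Ideal.mem_bot, ← hkrull, Ideal.mem_iInf]
  intro n
  rw [Ideal.span_singleton_pow, Ideal.mem_span_singleton]
  exact pow_dvd_of_expansion_eq_zero hT ha n

theorem exists_injective_algHom_of_isDedekindDomain {A : Type*} [CommRing A] [IsDedekindDomain A]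
    [Algebra K A] (r : A →ₐ[K] K) (hr : RingHom.ker r ≠ ⊥) :
    ∃ Φ : A →ₐ[K] K⟦X⟧,
      Function.Injective Φ ∧ ∀ a, PowerSeries.constantCoeff (Φ a) = r a := by
  have hprime : (RingHom.ker r).IsPrime := RingHom.ker_isPrime r
  let V := Localization.AtPrime (RingHom.ker r)
  have : IsDiscreteValuationRing V :=
    IsLocalization.AtPrime.isDiscreteValuationRing_of_dedekind_domain A hr V
  let rV : V →ₐ[K] K := IsLocalization.liftAlgHom (M := (RingHom.ker r).primeCompl) (f := r)
    fun y => isUnit_iff_ne_zero.2 y.2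
  obtain ⟨Φ, hΦ, hΦr⟩ := exists_injective_algHom_of_isDiscreteValuationRing rV
  refine ⟨Φ.comp (IsScalarTower.toAlgHom K A V), hΦ.comp (IsLocalization.injective V
    (RingHom.ker r).primeCompl_le_nonZeroDivisors), fun a => (hΦr _).trans ?_⟩
  exact IsLocalization.lift_eq _ a

end Expansion

section Lift

open scoped PowerSeries TensorProduct

universe u v

variable {S : Type*} {B : Type u} [CommRing S] [IsDomain S] [CommRing B] [IsDomain B]
  [Algebra S B] [Module.Finite S B]

theorem exists_finiteDimensional_lift {F : Type v} [Field F]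
    (hinj : Function.Injective (algebraMap S B)) (ψ : S →+* F) (hψ : Function.Injective ψ) :
    ∃ (L : Type max u v) (_ : Field L) (_ : Algebra F L) (g : B →+* L), FiniteDimensional F L ∧
      g.comp (algebraMap S B) = (algebraMap F L).comp ψ := by
  let := ψ.toAlgebra
  have : FaithfulSMul S (AlgebraicClosure F) := (faithfulSMul_iff_algebraMap_injective _ _).2
    ((algebraMap F (AlgebraicClosure F)).injective.comp hψ)
  have : FaithfulSMul S B := (faithfulSMul_iff_algebraMap_injective _ _).2 hinj
  let f : B →ₐ[S] AlgebraicClosure F := IsAlgClosed.lift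
  have : Nontrivial (F ⊗[S] B) := (Algebra.TensorProduct.productMap
    (IsScalarTower.toAlgHom S F (AlgebraicClosure F)) f).toRingHom.domain_nontrivial
  obtain ⟨M, hM⟩ := Ideal.exists_maximal (F ⊗[S] B)
  let inr : B →ₐ[S] F ⊗[S] B := Algebra.TensorProduct.includeRight
  refine ⟨(F ⊗[S] B) ⧸ M, Ideal.Quotient.field M, inferInstance,
    (Ideal.Quotient.mk M).comp (inr : B →+* F ⊗[S] B), inferInstance, RingHom.ext fun s => ?_⟩
  exact congrArg (Ideal.Quotient.mk M) (inr.commutes s)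

theorem exists_isDedekindDomain_lift {R : Type v} [CommRing R] [IsDedekindDomain R] [CharZero R]
    (hinj : Function.Injective (algebraMap S B)) (ψ : S →+* R) (hψ : Function.Injective ψ) :
    ∃ (A : Type max u v) (_ : CommRing A) (_ : Algebra R A) (g : B →+* A), IsDedekindDomain A ∧
      Algebra.IsIntegral R A ∧ FaithfulSMul R A ∧
      g.comp (algebraMap S B) = (algebraMap R A).comp ψ := by
  let F := FractionRing R
  have hRF : Function.Injective (algebraMap R F) := IsFractionRing.injective R F
  have : CharZero F := charZero_of_injective_algebraMap hRF
  obtain ⟨L, _, _, g, _, hg⟩ :=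
    exists_finiteDimensional_lift hinj ((algebraMap R F).comp ψ) (hRF.comp hψ)
  let := ((algebraMap F L).comp (algebraMap R F)).toAlgebra
  have : IsScalarTower R F L := .of_algebraMap_eq fun _ => rfl
  have hint (b : B) : g b ∈ (integralClosure R L).toSubring :=
    (Algebra.IsIntegral.isIntegral (R := S) b).map_of_comp_eq ψ g hg.symm
  refine ⟨integralClosure R L, inferInstance, inferInstance, g.codRestrict _ hint,
    integralClosure.isDedekindDomain R F L, inferInstance, ?_, ?_⟩
  · refine (faithfulSMul_iff_algebraMap_injective _ _).2 (.of_comp (f := Subtype.val) ?_)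
    exact (algebraMap F L).injective.comp hRF
  · ext s
    exact RingHom.congr_fun hg s

theorem exists_algHom_residue {K : Type*} [Field K] [IsAlgClosed K] {A : Type*} [CommRing A]
    [Nontrivial A] [Algebra K⟦X⟧ A] [Algebra K A] [IsScalarTower K K⟦X⟧ A]
    [Algebra.IsIntegral K⟦X⟧ A] :
    ∃ r : A →ₐ[K] K, r (algebraMap K⟦X⟧ A PowerSeries.X) = 0 := by
  obtain ⟨P, hP⟩ := Ideal.exists_maximal A
  have hcomap : P.comap (algebraMap K⟦X⟧ A) = IsLocalRing.maximalIdeal K⟦X⟧ :=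
    IsLocalRing.eq_maximalIdeal (Ideal.isMaximal_comap_of_isIntegral_of_isMaximal P)
  have hX : Ideal.Quotient.mk P (algebraMap K⟦X⟧ A PowerSeries.X) = 0 := by
    rw [Ideal.Quotient.eq_zero_iff_mem, ← Ideal.mem_comap, hcomap]
    exact PowerSeries.X_irreducible.not_isUnit
  have hfactor : (algebraMap K (A ⧸ P)).comp PowerSeries.constantCoeff =
      (Ideal.Quotient.mk P).comp (algebraMap K⟦X⟧ A) := by
    ext f
    conv_rhs => rw [RingHom.comp_apply, PowerSeries.eq_X_mul_shift_add_const f, map_add, map_add,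
      map_mul, map_mul, hX, zero_mul, zero_add]
    exact congrArg (Ideal.Quotient.mk P) (IsScalarTower.algebraMap_apply K K⟦X⟧ A _)
  have hint : ((Ideal.Quotient.mk P).comp (algebraMap K⟦X⟧ A)).IsIntegral :=
    (algebraMap_isIntegral_iff.2 inferInstance).trans _ _
      (RingHom.isIntegral_of_surjective _ Ideal.Quotient.mk_surjective)
  have hbij := IsAlgClosed.ringHom_bijective_of_isIntegral (algebraMap K (A ⧸ P))
    ((hfactor ▸ hint).tower_top _ _)
  let E : K ≃ₐ[K] A ⧸ P := .ofBijective (Algebra.ofId K (A ⧸ P)) hbij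
  exact ⟨(E.symm : A ⧸ P →ₐ[K] K).comp (Ideal.Quotient.mkₐ K P),
    (congrArg E.symm hX).trans (map_zero _)⟩

theorem exists_powerSeries_lift {K : Type*} [Field K] [IsAlgClosed K] [CharZero K]
    (hinj : Function.Injective (algebraMap S B)) (ψ : S →+* K⟦X⟧) (hψ : Function.Injective ψ) :
    ∃ (Φ : B →+* K⟦X⟧) (τ : K⟦X⟧ →ₐ[K] K⟦X⟧), Function.Injective τ ∧
      PowerSeries.constantCoeff (τ PowerSeries.X) = 0 ∧
      Φ.comp (algebraMap S B) = (τ : K⟦X⟧ →+* K⟦X⟧).comp ψ := by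
  have : CharZero K⟦X⟧ := charZero_of_injective_ringHom (PowerSeries.C_injective (R := K))
  obtain ⟨A, _, _, g, _, _, _, hg⟩ := exists_isDedekindDomain_lift hinj ψ hψ
  let := ((algebraMap K⟦X⟧ A).comp PowerSeries.C).toAlgebra
  have : IsScalarTower K K⟦X⟧ A := .of_algebraMap_eq fun _ => rfl
  have hRA : Function.Injective (algebraMap K⟦X⟧ A) := FaithfulSMul.algebraMap_injective _ _
  obtain ⟨r, hr⟩ := exists_algHom_residue (K := K) (A := A)
  obtain ⟨Φ, hΦ, hΦr⟩ := exists_injective_algHom_of_isDedekindDomain r fun hbot =>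
    PowerSeries.X_ne_zero (hRA (((Submodule.eq_bot_iff _).1 hbot _ hr).trans (map_zero _).symm))
  exact ⟨(Φ : A →+* K⟦X⟧).comp g, Φ.comp (IsScalarTower.toAlgHom K K⟦X⟧ A), hΦ.comp hRA,
    (hΦr _).trans hr, by rw [RingHom.comp_assoc, hg]; rfl⟩

end Lift

section ExistsArc

open scoped PowerSeries

universe u v

theorem exists_isAlgClosed_algebraicIndependent (F : Type u) [Field F] (ι : Type v) :
    ∃ (K : Type max u v) (_ : Field K) (_ : Algebra F K) (a : ι → K),
      IsAlgClosed K ∧ AlgebraicIndependent F a := by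
  let K := AlgebraicClosure (FractionRing (MvPolynomial ι F))
  have hinj : Function.Injective (algebraMap (MvPolynomial ι F) K) := by
    rw [IsScalarTower.algebraMap_eq _ (FractionRing (MvPolynomial ι F)) K]
    exact (algebraMap (FractionRing (MvPolynomial ι F)) K).injective.comp
      (IsFractionRing.injective _ _)
  exact ⟨K, inferInstance, inferInstance, _, inferInstance,
    (MvPolynomial.algebraicIndependent_X ι F).map'
      (f := IsScalarTower.toAlgHom F (MvPolynomial ι F) K) hinj⟩

variable [CharZero k] [IsScalarTower k (MvPolynomial (Fin d) k) S] [IsSLoc k d S]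
  {B : Type} [CommRing B] [IsDomain B] [Algebra S B] [Algebra k B] [IsScalarTower k S B]
  [Module.Finite S B]

theorem exists_algHom_scalesOrder (hinj : Function.Injective (algebraMap S B)) {N : ℕ}
    (hN : N ≠ 0) :
    ∃ (K : Type) (_ : Field K) (_ : Algebra k K) (φ : B →ₐ[k] K⟦X⟧) (e : ℕ), e ≠ 0 ∧
      ScalesOrder (mS k d S) (N * e) ((φ : B →+* K⟦X⟧).comp (algebraMap S B)) := by
  obtain ⟨K, _, _, a, _, ha⟩ := exists_isAlgClosed_algebraicIndependent k (Fin d)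
  have : CharZero K := charZero_of_injective_algebraMap (algebraMap k K).injective
  obtain ⟨ψ, hψ⟩ := exists_scalesOrder_line S ha
  obtain ⟨Φ, τ, hτ, hτX, hΦ⟩ := exists_powerSeries_lift hinj (ψ : S →+* K⟦X⟧)
    ((injective_iff_map_eq_zero _).2 fun s => not_imp_not.1 hψ.map_ne_zero)
  obtain ⟨e, he⟩ := ENat.ne_top_iff_exists.1 <| PowerSeries.order_eq_top.not.2 <|
    (map_ne_zero_iff τ hτ).2 PowerSeries.X_ne_zero
  have he0 : e ≠ 0 := fun h => PowerSeries.order_ne_zero_iff_constCoeff_eq_zero.2 hτX <| by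
    rw [← he, h, Nat.cast_zero]
  let ε : K⟦X⟧ →ₐ[K] K⟦X⟧ := PowerSeries.expand N hN
  let σ := ε.comp τ
  have hσ (s : S) : ε (Φ (algebraMap S B s)) = σ (ψ s) :=
    congrArg ε (RingHom.congr_fun hΦ s)
  have hσX : ((σ : K⟦X⟧ →+* K⟦X⟧) PowerSeries.X).order = (N * e : ℕ) := by
    rw [RingHom.coe_coe, AlgHom.comp_apply, PowerSeries.order_expand, ← he, nsmul_eq_mul,
      Nat.cast_mul]
  let φ : B →ₐ[k] K⟦X⟧ :=
    { (ε : K⟦X⟧ →+* K⟦X⟧).comp Φ with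
      commutes' := fun c => by
        rw [IsScalarTower.algebraMap_apply k S B]
        exact (hσ _).trans (((σ.restrictScalars k).comp ψ).commutes c) }
  refine ⟨K, inferInstance, inferInstance, φ, e, he0, ?_⟩
  rw [show (φ : B →+* K⟦X⟧).comp (algebraMap S B) = (σ : K⟦X⟧ →+* K⟦X⟧).comp ψ from
    RingHom.ext hσ]
  simpa only [mul_one] using hψ.comp _ hσX

end ExistsArc

/-! ### The contact algebra of an arc that scales orders -/

namespace ScalesOrder

open scoped PowerSeries

variable {K : Type} [Field K] [Algebra k K] {P : Presentation k d S}
  {D : Fin d → Derivation k S S} {φ : BRing P →ₐ[k] K⟦X⟧} {E M : ℕ}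
  (hφ : ScalesOrder (mS k d S) E ((φ : BRing P →+* K⟦X⟧).comp (algebraMap S (BRing P))))

include hφ

theorem X_pow_dvd_map_theta (hM : (M : ℝ≥0∞) ≤ E * reesOrder (mS k d S) (elimAlg P D))
    (i : Fin P.e) : PowerSeries.X ^ M ∣ φ (theta P i) := by
  refine P.dvd_map_theta (φ := (φ : BRing P →+* K⟦X⟧)) (pow_ne_zero M PowerSeries.X_ne_zero)
    fun j hj => ?_
  rw [← pow_mul]
  exact hφ.X_pow_dvd_map hM (P.C_Bc_mul_X_pow_mem_elimAlg D hj)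

theorem rOrd_le (hE : E ≠ 0) : rOrd P D φ ≤ E * reesOrder (mS k d S) (elimAlg P D) :=
  hφ.reesOrder_image_le hE fun g l hg hφg => Algebra.subset_adjoin (.inr ⟨g, l, hg, hφg, rfl⟩)

theorem natCast_le_rOrd (hM : (M : ℝ≥0∞) ≤ E * reesOrder (mS k d S) (elimAlg P D)) :
    M ≤ rOrd P D φ := by
  refine mod_cast coe_le_reesOrder_of_le_slopeAlg (q := M)
    (mt Ideal.span_singleton_eq_top.1 PowerSeries.X_irreducible.not_isUnit)
    (Algebra.adjoin_le (Set.union_subset ?_ ?_))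
  · rintro _ ⟨i, rfl⟩
    have hθ := hφ.X_pow_dvd_map_theta hM i
    rw [← pow_one X]
    refine C_mul_X_pow_mem_slopeAlg.2 ?_
    rwa [Nat.cast_one, mul_one, Nat.ceil_natCast, Ideal.span_singleton_pow,
      Ideal.mem_span_singleton]
  · rintro _ ⟨g, l, hg, -, rfl⟩
    refine C_mul_X_pow_mem_slopeAlg.2 ?_
    rw [← Nat.cast_mul, Nat.ceil_natCast, Ideal.span_singleton_pow, Ideal.mem_span_singleton]
    exact hφ.X_pow_dvd_map hM hg

theorem rOrd_eq (hE : E ≠ 0) (hM : (M : ℝ≥0∞) = E * reesOrder (mS k d S) (elimAlg P D)) :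
    rOrd P D φ = M :=
  le_antisymm (hM ▸ hφ.rOrd_le hE) (hφ.natCast_le_rOrd hM.le)

theorem rho_eq (hE : E ≠ 0) (hM : (M : ℝ≥0∞) = E * reesOrder (mS k d S) (elimAlg P D)) :
    rho P D φ = M :=
  persist_eq_of_reesOrder_eq PowerSeries.X_ne_zero PowerSeries.X_irreducible.not_isUnit
    (hφ.rOrd_eq hE hM)

theorem map_theta_ne_zero (i : Fin P.e) : φ (theta P i) ≠ 0 :=
  P.map_theta_ne_zero (φ := (φ : BRing P →+* K⟦X⟧)) (fun _ => hφ.map_ne_zero) i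

variable [IsSLoc k d S]

theorem X_pow_dvd_map_theta_self (i : Fin P.e) : PowerSeries.X ^ E ∣ φ (theta P i) :=
  hφ.X_pow_dvd_map_theta (D := 0) (le_mul_of_one_le_right' (one_le_reesOrder_elimAlg P 0)) i

theorem isArc (hE : E ≠ 0) (hD : ∀ j, D j (zvar k d S j) = 1) : IsArc P φ := by
  have := isNoetherianRing_of_isSLoc k d S
  refine ⟨fun s hs => ?_, fun i => ?_, hφ.map_theta_ne_zero,
    fun j => hφ.map_ne_zero (zvar_ne_zero (hD j))⟩
  · rcases eq_or_ne s 0 with rfl | hs0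
    · simp
    have hord : 1 ≤ adicOrder (mS k d S) s :=
      (mem_pow_iff_le_adicOrder (mS_ne_top k d S) hs0).1 (by rwa [pow_one])
    rw [tId, Ideal.mem_span_singleton, ← pow_one PowerSeries.X, X_pow_dvd_iff_le_order]
    refine le_of_le_of_eq ?_ (hφ s hs0).symm
    exact mod_cast Nat.mul_pos (Nat.pos_of_ne_zero hE) hord
  · exact Ideal.mem_span_singleton.2 ((dvd_pow_self _ hE).trans (hφ.X_pow_dvd_map_theta_self i))

theorem arcOrd_eq [Nonempty (Fin d)] (hD : ∀ j, D j (zvar k d S j) = 1) : arcOrd P φ = E := by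
  have hord (j : Fin d) : tOrd (φ (algebraMap S (BRing P) (zvar k d S j))) = E :=
    (hφ.adicOrder_map (zvar_ne_zero (hD j))).trans (by rw [adicOrder_zvar (hD j), mul_one])
  obtain ⟨j⟩ := ‹Nonempty (Fin d)›
  refine IsLeast.csInf_eq ⟨.inr ⟨j, hord j⟩, ?_⟩
  rintro _ (⟨i, rfl⟩ | ⟨j, rfl⟩)
  · change E ≤ adicOrder (tId K) (φ (theta P i))
    rw [← Nat.cast_le (α := ℕ∞), natCast_adicOrder_tId (hφ.map_theta_ne_zero i),
      ← X_pow_dvd_iff_le_order]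
    exact hφ.X_pow_dvd_map_theta_self i
  · exact (hord j).ge

end ScalesOrder

/-- (Corollary to Theorem `thm:main_order-rho`.)  Let `C` be the set of arcs `φ` in `X`
through `ξ` with `r_{X,φ}/ord(φ) = ord(G_X^{(d)})`.  Then
`ord(G_X^{(d)}) = max_{φ ∈ C} ρ_{X,φ}/ord(φ)`, and the maximum is attained. -/
theorem elimination_order_eq_max_normalized_persistance
    (k : Type) [Field k] [CharZero k] (d : ℕ) (hd : 1 ≤ d)
    (S : Type) [CommRing S] [IsDomain S] [Algebra (MvPolynomial (Fin d) k) S]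
    [Algebra k S] [IsScalarTower k (MvPolynomial (Fin d) k) S] [IsSLoc k d S]
    (D : Fin d → Derivation k S S)
    (hD : ∀ i j : Fin d, D j (zvar k d S i) = if i = j then 1 else 0)
    (P : Presentation k d S) :
    IsGreatest
      {q : ℝ≥0∞ | ∃ (K : Type) (_ : Field K) (_ : Algebra k K)
        (φ : BRing P →ₐ[k] PowerSeries K), IsArc P φ ∧
        rOrd P D φ / (arcOrd P φ : ℝ≥0∞) = reesOrder (mS k d S) (elimAlg P D) ∧
        q = (rho P D φ : ℝ≥0∞) / (arcOrd P φ : ℝ≥0∞)}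
      (reesOrder (mS k d S) (elimAlg P D)) := by
  have := P.hprime
  have := P.hfinite
  have : Nonempty (Fin d) := ⟨⟨0, hd⟩⟩
  have hDz (j : Fin d) : D j (zvar k d S j) = 1 := (hD j j).trans (if_pos rfl)
  refine ⟨?_, ?_⟩
  · obtain ⟨ν, N, hN, hord⟩ := exists_reesOrder_elimAlg_eq_div P D
    obtain ⟨K, _, _, φ, e, he, hφ⟩ :=
      exists_algHom_scalesOrder (k := k) (d := d) (B := BRing P) P.hinj hN
    have hE : N * e ≠ 0 := mul_ne_zero hN he
    have hM : ((ν * e : ℕ) : ℝ≥0∞) = (N * e : ℕ) * reesOrder (mS k d S) (elimAlg P D) := by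
      rw [hord, Nat.cast_mul, Nat.cast_mul, mul_right_comm,
        ENNReal.mul_div_cancel (Nat.cast_ne_zero.2 hN) (ENNReal.natCast_ne_top N)]
    have hquot := (ENNReal.eq_div_iff (Nat.cast_ne_zero.2 hE) (ENNReal.natCast_ne_top _)).2 hM.symm
    refine ⟨K, _, _, φ, hφ.isArc hE hDz, ?_, ?_⟩
    · rw [hφ.rOrd_eq hE hM, hφ.arcOrd_eq hDz, hquot]
    · rw [hφ.rho_eq hE hM, hφ.arcOrd_eq hDz, hquot]
  · rintro _ ⟨K, _, _, φ, -, hr, rfl⟩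
    rw [← hr]
    exact ENNReal.div_le_div_right (persist_le_reesOrder PowerSeries.X_ne_zero
      PowerSeries.X_irreducible.not_isUnit _) _

end NashMult
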